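/- Let L be a first-order language, α a type of variables with decidable equality, and M a nonempty L-structure. Let φ, ψ, ρ : L.Formula α. Suppose φ is satisfiable in M and φ and ρ are independent (their free-variable finsets are disjoint). Then the formulas φ ⊓ (ψ ⊔ ρ) and (φ ⊓ ψ) ⊔ ρ are equisatisfiable in M. -/

import Mathlib

open FirstOrder Language

/-- Realization only depends on the values of the free variables. -/
theorem realize_congr_freeVar {L : FirstOrder.Language} {α : Type*} [DecidableEq α]
    {M : Type*} [L.Structure M] (φ : L.Formula α) (v w : α → M)
    (h : ∀ a ∈ BoundedFormula.freeVarFinset φ, v a = w a) (hv : φ.Realize v) :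
    φ.Realize w :=
  (BoundedFormula.realize_restrictFreeVar (φ := φ) (f := fun a => (a : α)) (v := v) w
    (fun a => h a a.2)).1
    ((BoundedFormula.realize_restrictFreeVar (φ := φ) (f := fun a => (a : α)) (v := v) v
      (fun _ => rfl)).2 hv)

/-- Lemma 3.1: if `φ` is satisfiable in `M` and `φ` and `ρ` are independent
(disjoint free-variable finsets), then `φ ⊓ (ψ ⊔ ρ)` and `(φ ⊓ ψ) ⊔ ρ` are
equisatisfiable in `M`. -/
theorem independentSwap_equisat {L : FirstOrder.Language} {α : Type*} [DecidableEq α]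
    {M : Type*} [Nonempty M] [L.Structure M]
    (φ ψ ρ : L.Formula α)
    (hφ : ∃ v : α → M, φ.Realize v)
    (hind : Disjoint (BoundedFormula.freeVarFinset φ) (BoundedFormula.freeVarFinset ρ)) :
    ((∃ v : α → M, (φ ⊓ (ψ ⊔ ρ)).Realize v) ↔ (∃ v : α → M, ((φ ⊓ ψ) ⊔ ρ).Realize v)) := by
  simp only [Formula.realize_inf, Formula.realize_sup]
  constructor
  · rintro ⟨v, h1, h2⟩
    exact ⟨v, h2.imp (fun h => ⟨h1, h⟩) id⟩
  · rintro ⟨v, ⟨h1, h2⟩ | h⟩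
    · exact ⟨v, h1, Or.inl h2⟩
    · obtain ⟨u, hu⟩ := hφ
      refine ⟨fun a => if a ∈ BoundedFormula.freeVarFinset φ then u a else v a, ?_, Or.inr ?_⟩
      · exact realize_congr_freeVar φ u _ (fun a ha => by simp [ha]) hu
      · exact realize_congr_freeVar ρ v _
          (fun a ha => by simp [Finset.disjoint_right.1 hind ha]) h
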